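/- arXiv:1711.09132 — 5 statements merged into one kernel-verified Lean document; each statement's English description precedes it below -/
import Mathlib

section
/- Let X and Y be real 2×2 matrices with Y symmetric. Then the complex 2×2 matrix Y + i·(X J Xᵀ − J) (entrywise coercion of the real matrices into ℂ) is positive semidefinite if and only if Y is positive semidefinite and det Y ≥ (1 − det X)². (This is the complete positivity condition Y + iXΩXᵀ ≥ iΩ for a single-mode Gaussian channel, in the form Y ≥ 0 and √(det Y) ≥ |1 − det X|.) -/
open Matrix Complex
open scoped ComplexOrder

/-- The one-mode symplectic form. -/
def Jmat : Matrix (Fin 2) (Fin 2) ℝ := !![0, 1; -1, 0]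

/-!
A Hermitian `2 × 2` matrix has two real eigenvalues, hence it is positive semidefinite exactly when
their sum (the trace) and their product (the determinant) are nonnegative. The matrix in question is
`Y + iK` with `Y` symmetric and `K = X J Xᵀ - J = (det X - 1) J` skew-symmetric. The skew part does
not contribute to the trace, and in the determinant it does not interact with the symmetric part:
`tr (Y + iK) = tr Y` and `det (Y + iK) = det Y - det K`. Since `det K = (det X - 1) ^ 2 ≥ 0`,
nonnegativity of `det (Y + iK)` already forces `det Y ≥ 0`.
-/

theorem nonneg_and_nonneg_iff_add_nonneg_and_mul_nonneg {R : Type*} [Ring R] [LinearOrder R]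
    [IsStrictOrderedRing R] {a b : R} : 0 ≤ a ∧ 0 ≤ b ↔ 0 ≤ a + b ∧ 0 ≤ a * b := by
  refine ⟨fun ⟨ha, hb⟩ ↦ ⟨add_nonneg ha hb, mul_nonneg ha hb⟩, fun ⟨hadd, hmul⟩ ↦ ?_⟩
  rcases mul_nonneg_iff.mp hmul with hnonneg | ⟨ha, hb⟩
  · exact hnonneg
  · exact ⟨hadd.trans (add_le_of_nonpos_right hb), hadd.trans (add_le_of_nonpos_left ha)⟩

theorem posSemidef_fin_two_iff_of_isHermitian {𝕜 : Type*} [RCLike 𝕜]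
    {A : Matrix (Fin 2) (Fin 2) 𝕜} (hA : A.IsHermitian) :
    A.PosSemidef ↔ 0 ≤ A.trace ∧ 0 ≤ A.det := by
  rw [hA.posSemidef_iff_eigenvalues_nonneg, hA.trace_eq_sum_eigenvalues,
    hA.det_eq_prod_eigenvalues, Pi.le_def, Fin.forall_fin_two, Fin.sum_univ_two, Fin.prod_univ_two]
  exact_mod_cast nonneg_and_nonneg_iff_add_nonneg_and_mul_nonneg

theorem apply_self_eq_zero_of_transpose_eq_neg {n R : Type*} [AddGroup R] [IsAddTorsionFree R]
    {K : Matrix n n R} (hK : Kᵀ = -K) (i : n) : K i i = 0 :=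
  self_eq_neg.mp (congrFun₂ hK i i)

section SkewFinTwo

variable {R : Type*} [CommRing R] [IsAddTorsionFree R] {Y K : Matrix (Fin 2) (Fin 2) R}

theorem eq_of_transpose_eq_neg_fin_two (hK : Kᵀ = -K) : K = !![0, K 0 1; -K 0 1, 0] := by
  have hoff : K 1 0 = -K 0 1 := congrFun₂ hK 0 1
  exact K.eta_fin_two.trans (by simp only [apply_self_eq_zero_of_transpose_eq_neg hK, hoff])

theorem det_fin_two_of_transpose_eq_neg (hK : Kᵀ = -K) : K.det = K 0 1 ^ 2 := by
  rw [eq_of_transpose_eq_neg_fin_two hK, det_fin_two_of]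
  simp [sq]

theorem det_fin_two_add_of_isSymm_of_transpose_eq_neg (hY : Y.IsSymm) (hK : Kᵀ = -K) :
    (Y + K).det = Y.det + K.det := by
  rw [eq_of_transpose_eq_neg_fin_two hK]
  simp only [det_fin_two, Matrix.add_apply, of_apply, cons_val, hY.apply 0 1]
  ring

theorem mul_mul_transpose_fin_two_of_transpose_eq_neg (X : Matrix (Fin 2) (Fin 2) R)
    (hK : Kᵀ = -K) : X * K * Xᵀ = X.det • K := by
  rw [eq_of_transpose_eq_neg_fin_two hK]
  ext i j
  fin_cases i <;> fin_cases j <;> simp [mul_apply, det_fin_two] <;> ring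

end SkewFinTwo

section ComplexCombination

variable {n : Type*} {K : Matrix n n ℝ}

theorem isHermitian_map_ofReal_add_I_smul {Y : Matrix n n ℝ} (hY : Y.IsSymm) (hK : Kᵀ = -K) :
    (Y.map Complex.ofReal + I • K.map Complex.ofReal).IsHermitian := by
  refine IsHermitian.ext fun i j ↦ ?_
  have hKij : K j i = -K i j := congrFun₂ hK i j
  simp [hY.apply i j, hKij]

theorem trace_map_ofReal_add_I_smul [Fintype n] (Y : Matrix n n ℝ) (hK : Kᵀ = -K) :
    (Y.map Complex.ofReal + I • K.map Complex.ofReal).trace = (Y.trace : ℂ) := by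
  simp [trace, apply_self_eq_zero_of_transpose_eq_neg hK]

end ComplexCombination

theorem det_fin_two_map_ofReal_add_I_smul {Y K : Matrix (Fin 2) (Fin 2) ℝ} (hY : Y.IsSymm)
    (hK : Kᵀ = -K) :
    (Y.map Complex.ofReal + I • K.map Complex.ofReal).det = ((Y.det - K.det : ℝ) : ℂ) := by
  have hIK : (I • K.map Complex.ofReal)ᵀ = -(I • K.map Complex.ofReal) := by
    rw [transpose_smul, ← transpose_map, hK, Matrix.map_neg _ ofReal_neg, smul_neg]
  have hdet_map (A : Matrix (Fin 2) (Fin 2) ℝ) : (A.map Complex.ofReal).det = (A.det : ℂ) :=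
    (ofRealHom.map_det A).symm
  rw [det_fin_two_add_of_isSymm_of_transpose_eq_neg (hY.map _) hIK, det_smul, Fintype.card_fin,
    I_sq, hdet_map, hdet_map, neg_one_mul, ← sub_eq_add_neg, ofReal_sub]

theorem posSemidef_fin_two_map_ofReal_add_I_smul_iff {Y K : Matrix (Fin 2) (Fin 2) ℝ}
    (hY : Y.IsSymm) (hK : Kᵀ = -K) :
    (Y.map Complex.ofReal + I • K.map Complex.ofReal).PosSemidef ↔
      Y.PosSemidef ∧ K.det ≤ Y.det := by
  have hK_det : 0 ≤ K.det := det_fin_two_of_transpose_eq_neg hK ▸ sq_nonneg _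
  have hY_herm : Y.IsHermitian := by simpa using hY
  rw [posSemidef_fin_two_iff_of_isHermitian (isHermitian_map_ofReal_add_I_smul hY hK),
    posSemidef_fin_two_iff_of_isHermitian hY_herm,
    trace_map_ofReal_add_I_smul Y hK, det_fin_two_map_ofReal_add_I_smul hY hK,
    zero_le_real, zero_le_real, sub_nonneg]
  exact ⟨fun ⟨htrace, hdet⟩ ↦ ⟨⟨htrace, hK_det.trans hdet⟩, hdet⟩,
    fun ⟨⟨htrace, _⟩, hdet⟩ ↦ ⟨htrace, hdet⟩⟩

theorem transpose_Jmat : Jmatᵀ = -Jmat := by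
  ext i j
  fin_cases i <;> fin_cases j <;> simp [Jmat]

theorem det_Jmat : Jmat.det = 1 := by
  simp [Jmat]

theorem single_mode_complete_positivity
    (X Y : Matrix (Fin 2) (Fin 2) ℝ) (hY : Y.IsSymm) :
    (Y.map (Complex.ofReal ·) +
        Complex.I • ((X * Jmat * Xᵀ - Jmat).map (Complex.ofReal ·))).PosSemidef ↔
      Y.PosSemidef ∧ (1 - X.det) ^ 2 ≤ Y.det := by
  have hK : X * Jmat * Xᵀ - Jmat = (X.det - 1) • Jmat := by
    rw [mul_mul_transpose_fin_two_of_transpose_eq_neg X transpose_Jmat, sub_smul, one_smul]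
  have hK_transpose : ((X.det - 1) • Jmat)ᵀ = -((X.det - 1) • Jmat) := by
    rw [transpose_smul, transpose_Jmat, smul_neg]
  have hK_det : ((X.det - 1) • Jmat).det = (1 - X.det) ^ 2 := by
    rw [det_smul, Fintype.card_fin, det_Jmat, mul_one, sub_sq_comm]
  rw [hK, posSemidef_fin_two_map_ofReal_add_I_smul_iff hY hK_transpose, hK_det]
end

section
/- Let S be an invertible real 2m×2m matrix with S Ω Sᵀ = Ω, let ν₁, …, ν_m be positive reals with ν_j ν_k ≠ 1 for all j, k, and set V = S D Sᵀ where D is block-diagonal with 2×2 blocks ν_j·𝟙₂. Then for every real symmetric 2m×2m matrix W, the matrix L = Σ_{j,k=1}^{m} Σ_{l=0}^{3} [ tr( S⁻¹ W (Sᵀ)⁻¹ M_l^{jk} ) / ( ν_j ν_k − (−1)^l ) ] · (Sᵀ)⁻¹ M_l^{jk} S⁻¹ satisfies V L V + Ω L Ω = W. -/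
open Matrix

/-- The standard symplectic form on `ℝ^(2m)`: block-diagonal with `m` copies of
`J = !![0, 1; -1, 0]`. -/
def OmegaMat (m : ℕ) : Matrix (Fin (2 * m)) (Fin (2 * m)) ℝ :=
  Matrix.of fun i j =>
    if (j : ℕ) = (i : ℕ) + 1 ∧ (i : ℕ) % 2 = 0 then 1
    else if (i : ℕ) = (j : ℕ) + 1 ∧ (j : ℕ) % 2 = 0 then -1
    else 0

/-- The four 2×2 matrices `(1/√2)·{J, σ_z, 𝟙₂, σ_x}`. -/
noncomputable def blk : Fin 4 → Matrix (Fin 2) (Fin 2) ℝ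
  | 0 => (Real.sqrt 2)⁻¹ • !![0, 1; -1, 0]
  | 1 => (Real.sqrt 2)⁻¹ • !![1, 0; 0, -1]
  | 2 => (Real.sqrt 2)⁻¹ • !![1, 0; 0, 1]
  | 3 => (Real.sqrt 2)⁻¹ • !![0, 1; 1, 0]

/-- The matrix `M_l^{jk}`: zero except for the 2×2 block in block-position `(j,k)`,
which equals `blk l`. -/
noncomputable def Mmat (m : ℕ) (j k : Fin m) (l : Fin 4) :
    Matrix (Fin (2 * m)) (Fin (2 * m)) ℝ :=
  Matrix.of fun p q =>
    if (p : ℕ) / 2 = (j : ℕ) ∧ (q : ℕ) / 2 = (k : ℕ) then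
      blk l ⟨(p : ℕ) % 2, Nat.mod_lt _ two_pos⟩ ⟨(q : ℕ) % 2, Nat.mod_lt _ two_pos⟩
    else 0

/-- The block-diagonal matrix with 2×2 blocks `ν_j • 𝟙₂`. -/
def Dmat (m : ℕ) (ν : Fin m → ℝ) : Matrix (Fin (2 * m)) (Fin (2 * m)) ℝ :=
  Matrix.of fun p q =>
    if p = q then ν ⟨(p : ℕ) / 2, Nat.div_lt_of_lt_mul p.isLt⟩ else 0

/-!
Congruence by `S` carries the equation to its normal form `D X D + Ω X Ω = Y`, where every
`M_l^{jk}` is an eigenvector of `X ↦ D X D + Ω X Ω` with eigenvalue `ν_j ν_k - (-1)^l`. The matrices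
`M_l^{jk} = E_{jk} ⊗ B_l` are moreover an orthonormal basis for the pairing `tr (Aᵀ B)`, so
`∑ tr (X M) M = Xᵀ`, and dividing each coefficient by its eigenvalue inverts the operator.
-/

open scoped Kronecker

section TraceComplete

variable {R ι κ m n p q : Type*} [CommSemiring R] [Fintype ι] [Fintype κ]
  [DecidableEq m] [DecidableEq n] [DecidableEq p] [DecidableEq q]

/-- The completeness relation `∑ᵢ Bᵢ ⊗ Bᵢ = id` for the bilinear pairing `tr (Aᵀ B)` of matrices,
written in coordinates. For `card m * card n` matrices over a field it says that the family is an
orthonormal basis. -/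
def IsTraceComplete (B : ι → Matrix m n R) : Prop :=
  ∀ a b c d, ∑ i, B i a b * B i c d = (1 : Matrix m m R) a c * (1 : Matrix n n R) b d

namespace IsTraceComplete

theorem sum_trace_mul_smul [Fintype m] [Fintype n] {B : ι → Matrix m n R}
    (hB : IsTraceComplete B) (X : Matrix n m R) : ∑ i, (X * B i).trace • B i = Xᵀ := by
  ext c d
  calc (∑ i, (X * B i).trace • B i) c d
      = ∑ b, ∑ a, X b a * ∑ i, B i a b * B i c d := by
        simp only [Matrix.sum_apply, Matrix.smul_apply, smul_eq_mul, Matrix.trace,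
          Matrix.diag_apply, Matrix.mul_apply, Finset.sum_mul, Finset.mul_sum, mul_assoc]
        rw [Finset.sum_comm]
        exact Finset.sum_congr rfl fun _ _ => Finset.sum_comm
    _ = X d c := by simp [hB _ _ c d, Matrix.one_apply]

theorem kronecker {A : ι → Matrix m n R} {B : κ → Matrix p q R} (hA : IsTraceComplete A)
    (hB : IsTraceComplete B) : IsTraceComplete fun x : ι × κ => A x.1 ⊗ₖ B x.2 := by
  rintro ⟨a, a'⟩ ⟨b, b'⟩ ⟨c, c'⟩ ⟨d, d'⟩
  simp only [Matrix.kronecker_apply, ← Matrix.one_kronecker_one]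
  rw [mul_mul_mul_comm, ← hA, ← hB, Finset.sum_mul_sum, Fintype.sum_prod_type]
  exact Finset.sum_congr rfl fun _ _ => Finset.sum_congr rfl fun _ _ => mul_mul_mul_comm ..

theorem reindex {B : ι → Matrix m n R} (hB : IsTraceComplete B) (e : m ≃ p) (f : n ≃ q) :
    IsTraceComplete fun i => Matrix.reindex e f (B i) := by
  intro a b c d
  simpa [Matrix.one_apply] using hB (e.symm a) (f.symm b) (e.symm c) (f.symm d)

end IsTraceComplete

theorem isTraceComplete_single [Fintype m] [Fintype n] :
    IsTraceComplete fun x : m × n => Matrix.single x.1 x.2 (1 : R) := by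
  intro a b c d
  by_cases hac : a = c <;> by_cases hbd : b = d <;>
    simp [Fintype.sum_prod_type, Matrix.single_apply, Matrix.one_apply, ite_and, hac, hbd, eq_comm]

end TraceComplete

section Eigenvectors

variable {K E ι : Type*} [DivisionSemiring K] [AddCommMonoid E] [Module K E] [Fintype ι]

theorem map_sum_div_smul_of_map_eq_smul (T : E →ₗ[K] E) {b : ι → E} {μ : ι → K}
    (hT : ∀ i, T (b i) = μ i • b i) (hμ : ∀ i, μ i ≠ 0) (c : ι → K) :
    T (∑ i, (c i / μ i) • b i) = ∑ i, c i • b i := by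
  simp only [map_sum, map_smul, hT, smul_smul, div_mul_cancel₀ _ (hμ _)]

end Eigenvectors

theorem sub_neg_one_pow_ne_zero {R : Type*} [Ring R] {x : R} (hx : x ^ 2 ≠ 1) (l : ℕ) :
    x - (-1) ^ l ≠ 0 := by
  contrapose! hx
  rw [sub_eq_zero.1 hx, ← pow_mul, mul_comm, pow_mul, neg_one_sq, one_pow]

theorem diagonal_mul_single_mul_diagonal {R n : Type*} [CommSemiring R] [Fintype n]
    [DecidableEq n] (v w : n → R) (j k : n) :
    Matrix.diagonal v * Matrix.single j k 1 * Matrix.diagonal w =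
      (v j * w k) • Matrix.single j k 1 := by
  ext a b
  by_cases h : j = a ∧ k = b
  · obtain ⟨rfl, rfl⟩ := h
    simp
  · simp [h]

section Congruence

variable {R n : Type*} [CommRing R] [Fintype n] [DecidableEq n] {S : Matrix n n R}

theorem isUnit_det_of_isUnit_det_congruence {A : Matrix n n R}
    (h : IsUnit (S * A * Sᵀ).det) : IsUnit S.det := by
  rw [Matrix.det_mul, Matrix.det_mul] at h
  exact isUnit_of_mul_isUnit_left (isUnit_of_mul_isUnit_left h)

theorem congruence_transpose_inv_congruence (hS : IsUnit S.det) (W : Matrix n n R) :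
    S * (S⁻¹ * W * (Sᵀ)⁻¹)ᵀ * Sᵀ = Wᵀ := by
  have hST : IsUnit Sᵀ.det := by rwa [Matrix.det_transpose]
  simp only [Matrix.transpose_mul, Matrix.transpose_nonsing_inv, Matrix.transpose_transpose,
    Matrix.mul_assoc, Matrix.mul_nonsing_inv_cancel_left _ _ hS,
    Matrix.nonsing_inv_mul _ hST, Matrix.mul_one]

end Congruence

section SLDOperator

variable {R n : Type*} [Fintype n]

/-- The operator `X ↦ A X A + B X B`. With `A` a covariance matrix and `B` the symplectic form it is
the left-hand side of the equation for the symmetric logarithmic derivative. -/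
def sldOperator [CommSemiring R] (A B : Matrix n n R) : Matrix n n R →ₗ[R] Matrix n n R :=
  LinearMap.mulLeftRight R (A, A) + LinearMap.mulLeftRight R (B, B)

theorem sldOperator_apply [CommSemiring R] (A B X : Matrix n n R) :
    sldOperator A B X = A * X * A + B * X * B := by
  simp [sldOperator]

theorem sldOperator_congruence [CommRing R] [DecidableEq n] {S : Matrix n n R}
    (hS : IsUnit S.det) (A B X : Matrix n n R) :
    sldOperator (S * A * Sᵀ) (S * B * Sᵀ) ((Sᵀ)⁻¹ * X * S⁻¹) = S * sldOperator A B X * Sᵀ := by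
  have hST : IsUnit Sᵀ.det := by rwa [Matrix.det_transpose]
  have congruence_mul_mul_congruence (C : Matrix n n R) :
      S * C * Sᵀ * ((Sᵀ)⁻¹ * X * S⁻¹) * (S * C * Sᵀ) = S * (C * X * C) * Sᵀ := by
    simp only [Matrix.mul_assoc, Matrix.mul_nonsing_inv_cancel_left _ _ hST,
      Matrix.nonsing_inv_mul_cancel_left _ _ hS]
  simp only [sldOperator_apply, congruence_mul_mul_congruence, Matrix.mul_add, Matrix.add_mul]

end SLDOperator

section Blocks

theorem J_mul_blk_mul_J (l : Fin 4) :
    !![0, 1; -1, 0] * blk l * !![0, 1; -1, 0] = (-(-1 : ℝ) ^ (l : ℕ)) • blk l := by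
  ext a b
  fin_cases l <;> fin_cases a <;> fin_cases b <;> simp [blk] <;> norm_num

theorem isTraceComplete_blk : IsTraceComplete blk := by
  have inv_sqrt_two_mul_self : (√2)⁻¹ * (√2)⁻¹ = (1 / 2 : ℝ) := by
    rw [← mul_inv, Real.mul_self_sqrt zero_le_two, one_div]
  intro a b c d
  fin_cases a <;> fin_cases b <;> fin_cases c <;> fin_cases d <;>
    simp [blk, Fin.sum_univ_four, inv_sqrt_two_mul_self] <;> norm_num

variable (m : ℕ)

/-- The pair `(j, a)` labels coordinate `2 * j + a`, the `a`-th one of the `j`-th block. -/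
def blockEquiv : Fin m × Fin 2 ≃ Fin (2 * m) :=
  finProdFinEquiv.trans (finCongr (mul_comm m 2))

/-- Matrices indexed by (block, position in the block), so that block matrices become Kronecker
products, identified with matrices indexed by `Fin (2 * m)`. -/
def blockReindex :
    Matrix (Fin m × Fin 2) (Fin m × Fin 2) ℝ ≃ₐ[ℝ] Matrix (Fin (2 * m)) (Fin (2 * m)) ℝ :=
  Matrix.reindexAlgEquiv ℝ ℝ (blockEquiv m)

theorem blockReindex_apply (A : Matrix (Fin m × Fin 2) (Fin m × Fin 2) ℝ) (p q : Fin (2 * m)) :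
    blockReindex m A p q = A ((blockEquiv m).symm p) ((blockEquiv m).symm q) :=
  rfl

theorem blockEquiv_symm_apply (p : Fin (2 * m)) :
    (blockEquiv m).symm p =
      (⟨p / 2, Nat.div_lt_of_lt_mul p.isLt⟩, ⟨p % 2, Nat.mod_lt _ two_pos⟩) :=
  rfl

theorem OmegaMat_eq_blockReindex : OmegaMat m = blockReindex m (1 ⊗ₖ !![0, 1; -1, 0]) := by
  ext p q
  obtain ⟨⟨j, a⟩, rfl⟩ := (blockEquiv m).surjective p
  obtain ⟨⟨k, b⟩, rfl⟩ := (blockEquiv m).surjective q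
  have val_blockEquiv (j : Fin m) (a : Fin 2) : (blockEquiv m (j, a) : ℕ) = a + 2 * j := rfl
  simp only [blockReindex_apply, Equiv.symm_apply_apply, Matrix.kronecker_apply,
    Matrix.one_apply, OmegaMat, Matrix.of_apply, val_blockEquiv, Fin.ext_iff]
  fin_cases a <;> fin_cases b <;> simp <;> grind

theorem Dmat_eq_blockReindex (ν : Fin m → ℝ) :
    Dmat m ν = blockReindex m (Matrix.diagonal ν ⊗ₖ 1) := by
  ext p q
  rw [← Matrix.diagonal_one, Matrix.diagonal_kronecker_diagonal, blockReindex_apply]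
  simp only [Dmat, Matrix.of_apply, Matrix.diagonal_apply, (blockEquiv m).symm.injective.eq_iff,
    mul_one]
  rfl

theorem Mmat_eq_blockReindex (j k : Fin m) (l : Fin 4) :
    Mmat m j k l = blockReindex m (Matrix.single j k 1 ⊗ₖ blk l) := by
  ext p q
  simp [Mmat, blockReindex_apply, blockEquiv_symm_apply, Matrix.single_apply, Fin.ext_iff,
    eq_comm]

theorem det_OmegaMat : (OmegaMat m).det = 1 := by
  rw [OmegaMat_eq_blockReindex, blockReindex, Matrix.det_reindexAlgEquiv, Matrix.det_kronecker]
  simp [Matrix.det_fin_two_of]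

theorem Dmat_mul_Mmat_mul_Dmat (ν : Fin m → ℝ) (j k : Fin m) (l : Fin 4) :
    Dmat m ν * Mmat m j k l * Dmat m ν = (ν j * ν k) • Mmat m j k l := by
  rw [Dmat_eq_blockReindex, Mmat_eq_blockReindex, ← map_mul, ← map_mul,
    ← Matrix.mul_kronecker_mul, ← Matrix.mul_kronecker_mul, diagonal_mul_single_mul_diagonal,
    Matrix.one_mul, Matrix.mul_one, Matrix.smul_kronecker, map_smul]

theorem OmegaMat_mul_Mmat_mul_OmegaMat (j k : Fin m) (l : Fin 4) :
    OmegaMat m * Mmat m j k l * OmegaMat m = (-(-1 : ℝ) ^ (l : ℕ)) • Mmat m j k l := by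
  rw [OmegaMat_eq_blockReindex, Mmat_eq_blockReindex, ← map_mul, ← map_mul,
    ← Matrix.mul_kronecker_mul, ← Matrix.mul_kronecker_mul, J_mul_blk_mul_J,
    Matrix.one_mul, Matrix.mul_one, Matrix.kronecker_smul, map_smul]

theorem sldOperator_Mmat (ν : Fin m → ℝ) (j k : Fin m) (l : Fin 4) :
    sldOperator (Dmat m ν) (OmegaMat m) (Mmat m j k l) =
      (ν j * ν k - (-1 : ℝ) ^ (l : ℕ)) • Mmat m j k l := by
  rw [sldOperator_apply, Dmat_mul_Mmat_mul_Dmat, OmegaMat_mul_Mmat_mul_OmegaMat, ← add_smul,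
    ← sub_eq_add_neg]

theorem isTraceComplete_Mmat :
    IsTraceComplete fun x : (Fin m × Fin m) × Fin 4 => Mmat m x.1.1 x.1.2 x.2 := by
  simp only [Mmat_eq_blockReindex]
  exact (isTraceComplete_single.kronecker isTraceComplete_blk).reindex _ _

variable {m}

theorem sldOperator_Dmat_OmegaMat_sum {ν : Fin m → ℝ} (hν : ∀ j k, (ν j * ν k) ^ 2 ≠ 1)
    (X : Matrix (Fin (2 * m)) (Fin (2 * m)) ℝ) :
    sldOperator (Dmat m ν) (OmegaMat m) (∑ j : Fin m, ∑ k : Fin m, ∑ l : Fin 4,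
      ((X * Mmat m j k l).trace / (ν j * ν k - (-1 : ℝ) ^ (l : ℕ))) • Mmat m j k l) = Xᵀ := by
  rw [← (isTraceComplete_Mmat m).sum_trace_mul_smul X,
    ← map_sum_div_smul_of_map_eq_smul (sldOperator (Dmat m ν) (OmegaMat m))
      (fun x : (Fin m × Fin m) × Fin 4 => sldOperator_Mmat m ν x.1.1 x.1.2 x.2)
      (fun x => sub_neg_one_pow_ne_zero (hν x.1.1 x.1.2) x.2)]
  simp only [Fintype.sum_prod_type]

end Blocks

theorem sld_solution_general (m : ℕ)
    (S : Matrix (Fin (2 * m)) (Fin (2 * m)) ℝ)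
    (hsymp : S * OmegaMat m * Sᵀ = OmegaMat m)
    (ν : Fin m → ℝ) (hν : ∀ j k, (ν j * ν k) ^ 2 ≠ 1)
    (W : Matrix (Fin (2 * m)) (Fin (2 * m)) ℝ)
    (V : Matrix (Fin (2 * m)) (Fin (2 * m)) ℝ) (hV : V = S * Dmat m ν * Sᵀ)
    (L : Matrix (Fin (2 * m)) (Fin (2 * m)) ℝ)
    (hL : L = ∑ j : Fin m, ∑ k : Fin m, ∑ l : Fin 4,
      ((S⁻¹ * W * (Sᵀ)⁻¹ * Mmat m j k l).trace / (ν j * ν k - (-1 : ℝ) ^ (l : ℕ))) •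
        ((Sᵀ)⁻¹ * Mmat m j k l * S⁻¹)) :
    V * L * V + OmegaMat m * L * OmegaMat m = Wᵀ := by
  have hS : IsUnit S.det :=
    isUnit_det_of_isUnit_det_congruence (A := OmegaMat m) (by simp [hsymp, det_OmegaMat])
  set X := S⁻¹ * W * (Sᵀ)⁻¹
  set Y := ∑ j : Fin m, ∑ k : Fin m, ∑ l : Fin 4,
    ((X * Mmat m j k l).trace / (ν j * ν k - (-1 : ℝ) ^ (l : ℕ))) • Mmat m j k l with hY
  have hLY : L = (Sᵀ)⁻¹ * Y * S⁻¹ := by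
    simp only [hL, hY, Matrix.mul_sum, Matrix.sum_mul, Matrix.mul_smul, Matrix.smul_mul]
  calc V * L * V + OmegaMat m * L * OmegaMat m
      = sldOperator (S * Dmat m ν * Sᵀ) (S * OmegaMat m * Sᵀ) ((Sᵀ)⁻¹ * Y * S⁻¹) := by
        rw [sldOperator_apply, hsymp, ← hV, ← hLY]
    _ = S * sldOperator (Dmat m ν) (OmegaMat m) Y * Sᵀ := sldOperator_congruence hS _ _ _
    _ = S * Xᵀ * Sᵀ := by rw [hY, sldOperator_Dmat_OmegaMat_sum hν]
    _ = Wᵀ := congruence_transpose_inv_congruence hS W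

theorem sld_solution (m : ℕ)
    (S : Matrix (Fin (2 * m)) (Fin (2 * m)) ℝ) (hS : IsUnit S.det)
    (hsymp : S * OmegaMat m * Sᵀ = OmegaMat m)
    (ν : Fin m → ℝ) (hν : ∀ j, 0 < ν j) (hνν : ∀ j k, ν j * ν k ≠ 1)
    (W : Matrix (Fin (2 * m)) (Fin (2 * m)) ℝ) (hW : W.IsSymm)
    (V : Matrix (Fin (2 * m)) (Fin (2 * m)) ℝ) (hV : V = S * Dmat m ν * Sᵀ)
    (L : Matrix (Fin (2 * m)) (Fin (2 * m)) ℝ)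
    (hL : L = ∑ j : Fin m, ∑ k : Fin m, ∑ l : Fin 4,
      ((S⁻¹ * W * (Sᵀ)⁻¹ * Mmat m j k l).trace / (ν j * ν k - (-1 : ℝ) ^ (l : ℕ))) •
        ((Sᵀ)⁻¹ * Mmat m j k l * S⁻¹)) :
    V * L * V + OmegaMat m * L * OmegaMat m = W := by
  have hνν_sq (j k : Fin m) : (ν j * ν k) ^ 2 ≠ 1 := fun h =>
    hνν j k ((pow_eq_one_iff_of_nonneg (mul_pos (hν j) (hν k)).le two_ne_zero).1 h)
  rw [sld_solution_general m S hsymp ν hνν_sq W V hV L hL, hW.eq]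
end

section
/- Let S be an invertible real 2m×2m matrix with S Ω Sᵀ = Ω, let ν₁, …, ν_m be positive reals with ν_j ν_k ≠ 1 for all j, k, and set V = S D Sᵀ where D is block-diagonal with 2×2 blocks ν_j·𝟙₂. Then the linear map L ↦ V L V + Ω L Ω on real 2m×2m matrices is injective: if V L₁ V + Ω L₁ Ω = V L₂ V + Ω L₂ Ω then L₁ = L₂. In particular, for each real symmetric W there is at most one L with V L V + Ω L Ω = W. -/
open Matrix

/-!
For `v = s d t`, the relation `s ω t = ω` turns `v x v + ω x ω` into `s (d k d + ω k ω) t` with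
`k = t x s`. For matrices it also makes `s` and `t` invertible, as `ω` is, so it suffices to treat
`v = d`. When `ω` commutes with `d` and `ω² = -1`, composing `k ↦ d k d + ω k ω` with
`y ↦ d y d - ω y ω` gives `k ↦ d² k d² - k`, because the cross terms cancel. For `d` diagonal this
multiplies the entry `k i j` by `(d i * d j)² - 1`, which is nonzero.
-/

section Ring

variable {A : Type*} [Ring A] {d s t v x ω : A}

/-- The operator `x ↦ v x v + ω x ω` on a ring. For a covariance matrix `v` and symplectic form `ω`
its preimages are the symmetric logarithmic derivatives (SLD). It is bundled as an additive
homomorphism so that injectivity can be read off the kernel. -/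
def sldHom (v ω : A) : A →+ A where
  toFun x := v * x * v + ω * x * ω
  map_zero' := by simp
  map_add' x y := by noncomm_ring

theorem sldHom_apply : sldHom v ω x = v * x * v + ω * x * ω := rfl

theorem sldHom_conj_apply (hst : s * ω * t = ω) :
    sldHom (s * d * t) ω x = s * sldHom d ω (t * x * s) * t :=
  calc
    sldHom (s * d * t) ω x = s * d * t * x * (s * d * t) + s * ω * t * x * (s * ω * t) := by
      rw [sldHom_apply, hst]
    _ = s * sldHom d ω (t * x * s) * t := by
      rw [sldHom_apply]
      noncomm_ring

theorem sldHom_conj_injective [IsDedekindFiniteMonoid A] (hω : IsUnit ω) (hst : s * ω * t = ω)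
    (hd : Function.Injective (sldHom d ω)) : Function.Injective (sldHom (s * d * t) ω) := by
  have hsωt : IsUnit (s * ω * t) := hst.symm ▸ hω
  have hs : IsUnit s := isUnit_of_mul_isUnit_left (isUnit_of_mul_isUnit_left hsωt)
  have ht : IsUnit t := isUnit_of_mul_isUnit_right hsωt
  rw [injective_iff_map_eq_zero] at hd ⊢
  intro x hx
  rw [sldHom_conj_apply hst, ht.mul_left_eq_zero, hs.mul_right_eq_zero] at hx
  rw [← ht.mul_right_eq_zero, ← hs.mul_left_eq_zero]
  exact hd _ hx

theorem mul_sldHom_mul_sub_mul_sldHom_mul (hω : ω * ω = -1) (hωd : Commute ω d) :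
    d * sldHom d ω x * d - ω * sldHom d ω x * ω = d * d * x * (d * d) - x :=
  calc
    d * sldHom d ω x * d - ω * sldHom d ω x * ω
        = d * d * x * (d * d) - ω * ω * x * (ω * ω)
          + (d * ω * x * (ω * d) - ω * d * x * (d * ω)) := by
      rw [sldHom_apply]
      noncomm_ring
    _ = d * d * x * (d * d) - x := by simp [hω, hωd.eq]

end Ring

section Diagonal

variable {n R : Type*} [Fintype n] [DecidableEq n] [CommRing R] [NoZeroDivisors R]

theorem eq_zero_of_diagonal_mul_mul_diagonal_eq_self {l : Type*} [Fintype l] [DecidableEq l]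
    {d : l → R} {e : n → R} {X : Matrix l n R} (hde : ∀ i j, d i * e j ≠ 1)
    (hX : diagonal d * X * diagonal e = X) : X = 0 := by
  ext i j
  have hentry : d i * X i j * e j = X i j := by
    simpa only [mul_diagonal, diagonal_mul] using congr_fun₂ hX i j
  have hfactor : (d i * e j - 1) * X i j = 0 := by linear_combination hentry
  exact (mul_eq_zero.mp hfactor).resolve_left (sub_ne_zero.mpr (hde i j))

variable {d : n → R} {Ω S T : Matrix n n R}

theorem sldHom_diagonal_injective (hΩ : Ω * Ω = -1) (hΩd : Commute Ω (diagonal d))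
    (hd : ∀ i j, (d i * d j) ^ 2 ≠ 1) : Function.Injective (sldHom (diagonal d) Ω) := by
  rw [injective_iff_map_eq_zero]
  intro X hX
  have hfixed := mul_sldHom_mul_sub_mul_sldHom_mul (x := X) hΩ hΩd
  rw [hX, mul_zero, zero_mul, mul_zero, zero_mul, sub_zero, eq_comm, sub_eq_zero,
    diagonal_mul_diagonal] at hfixed
  refine eq_zero_of_diagonal_mul_mul_diagonal_eq_self (fun i j => ?_) hfixed
  rw [mul_mul_mul_comm, ← sq]
  exact hd i j

theorem sld_uniqueness_general (hΩ : Ω * Ω = -1)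
    (hΩd : Commute Ω (diagonal d)) (hd : ∀ i j, (d i * d j) ^ 2 ≠ 1) (hST : S * Ω * T = Ω) :
    Function.Injective (sldHom (S * diagonal d * T) Ω) := by
  have hΩ_unit : IsUnit Ω := .of_mul_eq_one (-Ω) (by rw [mul_neg, hΩ, neg_neg])
  exact sldHom_conj_injective hΩ_unit hST (sldHom_diagonal_injective hΩ hΩd hd)

end Diagonal

section StandardForm

variable (m : ℕ) (ν : Fin m → ℝ)

/-- The indexing `(a, j) ↦ 2 * j + a` of the coordinates of `ℝ^(2m)` by a position `a` inside a
`2 × 2` block and the number `j` of the block, in the order used by `Matrix.blockDiagonal`. -/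
def blockIndexEquiv : Fin 2 × Fin m ≃ Fin (2 * m) :=
  (Equiv.prodComm _ _).trans (finProdFinEquiv.trans (finCongr (mul_comm m 2)))

theorem val_blockIndexEquiv (p : Fin 2 × Fin m) :
    (blockIndexEquiv m p : ℕ) = p.1 + 2 * p.2 := rfl

theorem omegaMat_eq_submatrix_blockDiagonal :
    OmegaMat m = (blockDiagonal fun _ : Fin m => !![(0 : ℝ), 1; -1, 0]).submatrix
      (blockIndexEquiv m).symm (blockIndexEquiv m).symm := by
  rw [← (OmegaMat m).submatrix_id_id, ← (blockIndexEquiv m).self_comp_symm, ← submatrix_submatrix]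
  congr 1
  ext ⟨a, j⟩ ⟨b, k⟩
  simp only [OmegaMat, submatrix_apply, of_apply, val_blockIndexEquiv, blockDiagonal_apply,
    Fin.ext_iff]
  fin_cases a <;> fin_cases b <;> grind [cons_val', cons_val_zero, cons_val_one, cons_val_fin_one]

theorem dmat_eq_diagonal :
    Dmat m ν = diagonal fun p => ν ((blockIndexEquiv m).symm p).2 := by
  ext p q
  simp only [Dmat, of_apply, diagonal_apply]
  rfl

theorem dmat_eq_submatrix_blockDiagonal :
    Dmat m ν = (blockDiagonal fun j : Fin m => diagonal fun _ : Fin 2 => ν j).submatrix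
      (blockIndexEquiv m).symm (blockIndexEquiv m).symm := by
  rw [dmat_eq_diagonal, blockDiagonal_diagonal, submatrix_diagonal_equiv]
  rfl

theorem omegaMat_mul_self : OmegaMat m * OmegaMat m = -1 := by
  have hJ : (fun _ : Fin m => !![(0 : ℝ), 1; -1, 0] * !![(0 : ℝ), 1; -1, 0]) = -1 := by
    ext _ a b
    fin_cases a <;> fin_cases b <;> simp
  rw [omegaMat_eq_submatrix_blockDiagonal, submatrix_mul_equiv, ← blockDiagonal_mul, hJ,
    blockDiagonal_neg, blockDiagonal_one, submatrix_neg, Pi.neg_apply, Pi.neg_apply,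
    submatrix_one_equiv]

theorem commute_omegaMat_dmat : Commute (OmegaMat m) (Dmat m ν) := by
  rw [omegaMat_eq_submatrix_blockDiagonal, dmat_eq_submatrix_blockDiagonal, commute_iff_eq,
    submatrix_mul_equiv, submatrix_mul_equiv, ← blockDiagonal_mul, ← blockDiagonal_mul]
  congr! 3 with j
  exact (scalar_commute (ν j) (Commute.all _) _).symm

end StandardForm

theorem sld_uniqueness (m : ℕ)
    (S : Matrix (Fin (2 * m)) (Fin (2 * m)) ℝ) (hS : IsUnit S.det)
    (hsymp : S * OmegaMat m * Sᵀ = OmegaMat m)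
    (ν : Fin m → ℝ) (hν : ∀ j, 0 < ν j) (hνν : ∀ j k, ν j * ν k ≠ 1)
    (V : Matrix (Fin (2 * m)) (Fin (2 * m)) ℝ) (hV : V = S * Dmat m ν * Sᵀ)
    (L₁ L₂ : Matrix (Fin (2 * m)) (Fin (2 * m)) ℝ)
    (h : V * L₁ * V + OmegaMat m * L₁ * OmegaMat m
        = V * L₂ * V + OmegaMat m * L₂ * OmegaMat m) :
    L₁ = L₂ := by
  rw [dmat_eq_diagonal] at hV
  subst hV
  refine sld_uniqueness_general (omegaMat_mul_self m)
    (dmat_eq_diagonal m ν ▸ commute_omegaMat_dmat m ν) (fun i j => ?_) hsymp h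
  exact (pow_eq_one_iff_of_nonneg (mul_pos (hν _) (hν _)).le two_ne_zero).not.mpr (hνν _ _)
end

section
/- In the two-mode noisy interferometry setting, any symmetric L_φ with V L_φ V + Ω L_φ Ω = ∂_φ V satisfies ℱ_{φφ} := (1/2)·tr( (∂_φ V) · L_φ ) + 2·(∂_φ d)ᵀ V⁻¹ (∂_φ d) = 2 a² x ( x·sinh(2r) + x·cosh(2r) + y ) / ( 2 x y cosh(2r) + x² + y² ). -/
open Matrix

noncomputable section

/-- The standard symplectic form on two modes (4×4). -/
def Omega4 : Matrix (Fin 4) (Fin 4) ℝ :=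
  !![0, 1, 0, 0; -1, 0, 0, 0; 0, 0, 0, 1; 0, 0, -1, 0]

/-- Covariance matrix of the two-mode squeezed input with squeezing parameter `r`. -/
def V0 (r : ℝ) : Matrix (Fin 4) (Fin 4) ℝ :=
  !![Real.cosh (2*r), 0, Real.sinh (2*r), 0;
     0, Real.cosh (2*r), 0, -Real.sinh (2*r);
     Real.sinh (2*r), 0, Real.cosh (2*r), 0;
     0, -Real.sinh (2*r), 0, Real.cosh (2*r)]

/-- Input displacement `√2·(0, a, 0, a)ᵀ` of the optimal probe. -/
def d0 (a : ℝ) : Fin 4 → ℝ := ![0, Real.sqrt 2 * a, 0, Real.sqrt 2 * a]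

/-- Phase rotations by `±φ/2` on the two modes. -/
def Sphase (φ : ℝ) : Matrix (Fin 4) (Fin 4) ℝ :=
  !![Real.cos (φ/2), Real.sin (φ/2), 0, 0;
     -Real.sin (φ/2), Real.cos (φ/2), 0, 0;
     0, 0, Real.cos (φ/2), -Real.sin (φ/2);
     0, 0, Real.sin (φ/2), Real.cos (φ/2)]

/-- Evolved covariance matrix `x·S_φ V₀ S_φᵀ + y·𝟙₄`. -/
def Vm (r φ x y : ℝ) : Matrix (Fin 4) (Fin 4) ℝ :=
  x • (Sphase φ * V0 r * (Sphase φ)ᵀ) + y • (1 : Matrix (Fin 4) (Fin 4) ℝ)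

/-- Evolved displacement `√x·S_φ d₀`. -/
def dm (a φ x : ℝ) : Fin 4 → ℝ := Real.sqrt x • (Sphase φ).mulVec (d0 a)

/-- Entrywise partial derivative of `Vm` with respect to `φ`. -/
def dVdphi (r φ x y : ℝ) : Matrix (Fin 4) (Fin 4) ℝ :=
  Matrix.of fun i j => deriv (fun t => Vm r t x y i j) φ

/-- Entrywise partial derivative of `Vm` with respect to `x`. -/
def dVdx (r φ x y : ℝ) : Matrix (Fin 4) (Fin 4) ℝ :=
  Matrix.of fun i j => deriv (fun t => Vm r φ t y i j) x

/-- Entrywise partial derivative of `Vm` with respect to `y`. -/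
def dVdy (r φ x y : ℝ) : Matrix (Fin 4) (Fin 4) ℝ :=
  Matrix.of fun i j => deriv (fun t => Vm r φ x t i j) y

/-- Entrywise partial derivative of `dm` with respect to `φ`. -/
def ddphi (a φ x : ℝ) : Fin 4 → ℝ := fun i => deriv (fun t => dm a t x i) φ

/-- Entrywise partial derivative of `dm` with respect to `x`. -/
def ddx (a φ x : ℝ) : Fin 4 → ℝ := fun i => deriv (fun t => dm a φ t i) x

/-- Entrywise partial derivative of `dm` with respect to `y` (the displacement does
not depend on `y`). -/
def ddy (a φ x y : ℝ) : Fin 4 → ℝ := fun i => deriv (fun _t : ℝ => dm a φ x i) y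

/-!
The input covariance commutes with the generator `G = J ⊕ (-J)` of the phase rotations `S_φ`, so the
evolved covariance `V` does not depend on `φ` and only the displacement contributes to the quantum
Fisher information. Since `∂_φ S_φ = S_φ G / 2` and `G d₀` lies in the squeezed eigenspace of `V₀`,
for the eigenvalue `exp (-2r)`, the vector `∂_φ d` is an eigenvector of `V` for `x exp (-2r) + y`.
As `‖∂_φ d‖² = a² x`, this gives `2 a² x / (x exp (-2r) + y)`; multiplying numerator and denominator
by the antisqueezed eigenvalue `x exp (2r) + y` produces the stated fraction.
-/

section LinearAlgebra

variable {m n R : Type*} [Fintype m] [Fintype n] [DecidableEq n]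

theorem inv_mulVec_eq_inv_smul_of_mulVec_eq_smul [Field R] {A : Matrix n n R} {v : n → R} {μ : R}
    (hA : IsUnit A) (hμ : μ ≠ 0) (hv : A *ᵥ v = μ • v) : A⁻¹ *ᵥ v = μ⁻¹ • v := by
  rw [eq_inv_smul_iff₀ hμ, ← mulVec_smul, ← hv, mulVec_mulVec,
    nonsing_inv_mul A ((isUnit_iff_isUnit_det A).mp hA), one_mulVec]

theorem mulVec_dotProduct_mulVec_of_transpose_mul_self_eq_one [CommSemiring R] {A : Matrix m n R}
    (hA : Aᵀ * A = 1) (u v : n → R) : A *ᵥ u ⬝ᵥ A *ᵥ v = u ⬝ᵥ v := by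
  rw [dotProduct_mulVec, ← vecMul_transpose, vecMul_vecMul, hA, vecMul_one]

end LinearAlgebra

section PhaseRotation

/-- The generator `J ⊕ (-J)` of the phase rotations: `Sphase φ` is the exponential of
`(φ/2) • phaseGenerator`. -/
def phaseGenerator : Matrix (Fin 4) (Fin 4) ℝ :=
  !![0, 1, 0, 0; -1, 0, 0, 0; 0, 0, 0, -1; 0, 0, 1, 0]

theorem phaseGenerator_mul_self : phaseGenerator * phaseGenerator = -1 := by
  ext i j
  fin_cases i <;> fin_cases j <;> simp [phaseGenerator, mul_apply, Fin.sum_univ_four]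

theorem transpose_phaseGenerator : phaseGeneratorᵀ = -phaseGenerator := by
  ext i j
  fin_cases i <;> fin_cases j <;> simp [phaseGenerator]

theorem transpose_phaseGenerator_mul_self : phaseGeneratorᵀ * phaseGenerator = 1 := by
  rw [transpose_phaseGenerator, neg_mul, phaseGenerator_mul_self, neg_neg]

theorem commute_phaseGenerator_V0 (r : ℝ) : Commute phaseGenerator (V0 r) := by
  ext i j
  fin_cases i <;> fin_cases j <;> simp [phaseGenerator, V0, mul_apply, Fin.sum_univ_four]

theorem Sphase_eq_cos_smul_one_add_sin_smul (φ : ℝ) :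
    Sphase φ = Real.cos (φ / 2) • 1 + Real.sin (φ / 2) • phaseGenerator := by
  ext i j
  fin_cases i <;> fin_cases j <;> simp [Sphase, phaseGenerator]

theorem transpose_Sphase (φ : ℝ) : (Sphase φ)ᵀ = Sphase (-φ) := by
  simp [Sphase_eq_cos_smul_one_add_sin_smul, transpose_phaseGenerator, neg_div]

theorem Sphase_mul (φ ψ : ℝ) : Sphase φ * Sphase ψ = Sphase (φ + ψ) := by
  simp only [Sphase_eq_cos_smul_one_add_sin_smul, add_div, Real.cos_add, Real.sin_add, add_mul,
    mul_add, smul_mul_smul_comm, phaseGenerator_mul_self, mul_one, one_mul]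
  module

theorem Sphase_zero : Sphase 0 = 1 := by
  simp [Sphase_eq_cos_smul_one_add_sin_smul]

theorem transpose_Sphase_mul_self (φ : ℝ) : (Sphase φ)ᵀ * Sphase φ = 1 := by
  rw [transpose_Sphase, Sphase_mul, neg_add_cancel, Sphase_zero]

theorem commute_Sphase_V0 (φ r : ℝ) : Commute (Sphase φ) (V0 r) := by
  rw [Sphase_eq_cos_smul_one_add_sin_smul]
  exact ((Commute.one_left _).smul_left _).add_left ((commute_phaseGenerator_V0 r).smul_left _)

theorem Sphase_mul_V0_mul_transpose (φ r : ℝ) : Sphase φ * V0 r * (Sphase φ)ᵀ = V0 r := by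
  rw [(commute_Sphase_V0 φ r).eq, mul_assoc, mul_eq_one_comm.mp (transpose_Sphase_mul_self φ),
    mul_one]

theorem hasDerivAt_Sphase_mulVec (φ : ℝ) (v : Fin 4 → ℝ) :
    HasDerivAt (fun t => Sphase t *ᵥ v) ((1 / 2 : ℝ) • Sphase φ *ᵥ (phaseGenerator *ᵥ v)) φ := by
  have half : HasDerivAt (fun t : ℝ => t / 2) (1 / 2) φ := (hasDerivAt_id φ).div_const 2
  have expand (t : ℝ) (w : Fin 4 → ℝ) : Sphase t *ᵥ w =
      Real.cos (t / 2) • w + Real.sin (t / 2) • phaseGenerator *ᵥ w := by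
    rw [Sphase_eq_cos_smul_one_add_sin_smul, add_mulVec, smul_mulVec, smul_mulVec, one_mulVec]
  simp only [expand, mulVec_mulVec, phaseGenerator_mul_self, neg_mulVec, one_mulVec]
  refine ((half.cos.smul_const v).add (half.sin.smul_const (phaseGenerator *ᵥ v))).congr_deriv ?_
  module

end PhaseRotation

section Covariance

theorem V0_mul_V0_neg (r : ℝ) : V0 r * V0 (-r) = 1 := by
  have hyp := Real.cosh_sq_sub_sinh_sq (2 * r)
  ext i j
  fin_cases i <;> fin_cases j <;>
    simp [V0, mul_apply, Fin.sum_univ_four] <;> linarith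

theorem V0_add_V0_neg (r : ℝ) : V0 r + V0 (-r) = (2 * Real.cosh (2 * r)) • 1 := by
  ext i j
  fin_cases i <;> fin_cases j <;> simp [V0, ← two_mul]

theorem Vm_eq_smul_V0_add_smul_one (r φ x y : ℝ) : Vm r φ x y = x • V0 r + y • 1 := by
  rw [Vm, Sphase_mul_V0_mul_transpose]

theorem dVdphi_eq_zero (r φ x y : ℝ) : dVdphi r φ x y = 0 := by
  ext i j
  simp only [dVdphi, Vm_eq_smul_V0_add_smul_one, of_apply, deriv_const, Matrix.zero_apply]

theorem Vm_mul_Vm_neg (r φ x y : ℝ) :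
    Vm r φ x y * Vm (-r) φ x y = (2 * x * y * Real.cosh (2 * r) + x ^ 2 + y ^ 2) • 1 := by
  calc Vm r φ x y * Vm (-r) φ x y
      = x ^ 2 • (V0 r * V0 (-r)) + (x * y) • (V0 r + V0 (-r)) + y ^ 2 • 1 := by
        simp only [Vm_eq_smul_V0_add_smul_one, add_mul, mul_add, smul_mul_smul_comm, mul_one,
          one_mul]
        module
    _ = (2 * x * y * Real.cosh (2 * r) + x ^ 2 + y ^ 2) • 1 := by
        rw [V0_mul_V0_neg, V0_add_V0_neg]
        module

theorem isUnit_Vm {r x y : ℝ} (φ : ℝ) (hD : 2 * x * y * Real.cosh (2 * r) + x ^ 2 + y ^ 2 ≠ 0) :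
    IsUnit (Vm r φ x y) := by
  refine IsUnit.of_mul_eq_one ((2 * x * y * Real.cosh (2 * r) + x ^ 2 + y ^ 2)⁻¹ • Vm (-r) φ x y) ?_
  rw [mul_smul_comm, Vm_mul_Vm_neg, inv_smul_smul₀ hD]

theorem mul_exp_add_mul_mul_exp_neg_add (r x y : ℝ) :
    (x * Real.exp (2 * r) + y) * (x * Real.exp (-(2 * r)) + y) =
      2 * x * y * Real.cosh (2 * r) + x ^ 2 + y ^ 2 := by
  rw [← Real.cosh_add_sinh, ← Real.cosh_sub_sinh]
  linear_combination x ^ 2 * Real.cosh_sq_sub_sinh_sq (2 * r)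

end Covariance

section Displacement

theorem ddphi_eq_smul_Sphase_mulVec (a φ x : ℝ) :
    ddphi a φ x = (√x / 2) • Sphase φ *ᵥ (phaseGenerator *ᵥ d0 a) := by
  have hasDerivAt_dm :
      HasDerivAt (fun t => dm a t x) ((√x / 2) • Sphase φ *ᵥ (phaseGenerator *ᵥ d0 a)) φ := by
    rw [← mul_one_div, ← smul_smul]
    exact (hasDerivAt_Sphase_mulVec φ (d0 a)).const_smul √x
  ext i
  exact (hasDerivAt_pi.mp hasDerivAt_dm i).deriv

theorem V0_mulVec_phaseGenerator_mulVec_d0 (r a : ℝ) :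
    V0 r *ᵥ (phaseGenerator *ᵥ d0 a) = Real.exp (-(2 * r)) • phaseGenerator *ᵥ d0 a := by
  rw [← Real.cosh_sub_sinh]
  ext i
  fin_cases i <;>
    simp [V0, phaseGenerator, d0, mulVec, dotProduct, Fin.sum_univ_four,
      -Real.cosh_sub_sinh] <;> ring

theorem Vm_mulVec_ddphi (r a φ x y : ℝ) :
    Vm r φ x y *ᵥ ddphi a φ x = (x * Real.exp (-(2 * r)) + y) • ddphi a φ x := by
  have hV0 : V0 r *ᵥ ddphi a φ x = Real.exp (-(2 * r)) • ddphi a φ x := by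
    rw [ddphi_eq_smul_Sphase_mulVec, mulVec_smul, mulVec_mulVec, ← (commute_Sphase_V0 φ r).eq,
      ← mulVec_mulVec, V0_mulVec_phaseGenerator_mulVec_d0, mulVec_smul, smul_comm]
  rw [Vm_eq_smul_V0_add_smul_one, add_mulVec, smul_mulVec, smul_mulVec, one_mulVec, hV0, smul_smul,
    add_smul]

theorem d0_dotProduct_self (a : ℝ) : d0 a ⬝ᵥ d0 a = 4 * a ^ 2 := by
  have sqrt_two : √2 ^ 2 = (2 : ℝ) := Real.sq_sqrt zero_le_two
  simp only [d0, dotProduct, Fin.sum_univ_four, cons_val]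
  linear_combination 2 * a ^ 2 * sqrt_two

theorem ddphi_dotProduct_self (a φ : ℝ) {x : ℝ} (hx : 0 ≤ x) :
    ddphi a φ x ⬝ᵥ ddphi a φ x = a ^ 2 * x := by
  rw [ddphi_eq_smul_Sphase_mulVec, smul_dotProduct, dotProduct_smul,
    mulVec_dotProduct_mulVec_of_transpose_mul_self_eq_one (transpose_Sphase_mul_self φ),
    mulVec_dotProduct_mulVec_of_transpose_mul_self_eq_one transpose_phaseGenerator_mul_self,
    d0_dotProduct_self, smul_eq_mul, smul_eq_mul]
  linear_combination a ^ 2 * Real.sq_sqrt hx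

theorem ddphi_dotProduct_inv_Vm_mulVec_ddphi (r a φ x y : ℝ) (hx : 0 ≤ x)
    (hD : 2 * x * y * Real.cosh (2 * r) + x ^ 2 + y ^ 2 ≠ 0) :
    ddphi a φ x ⬝ᵥ (Vm r φ x y)⁻¹ *ᵥ ddphi a φ x =
      a ^ 2 * x / (x * Real.exp (-(2 * r)) + y) := by
  have eigenvalue_ne_zero : x * Real.exp (-(2 * r)) + y ≠ 0 :=
    right_ne_zero_of_mul (mul_exp_add_mul_mul_exp_neg_add r x y ▸ hD)
  rw [inv_mulVec_eq_inv_smul_of_mulVec_eq_smul (isUnit_Vm φ hD) eigenvalue_ne_zero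
    (Vm_mulVec_ddphi r a φ x y), dotProduct_smul, ddphi_dotProduct_self a φ hx, smul_eq_mul,
    inv_mul_eq_div]

end Displacement

theorem qfi_phi_phi_general (r a φ x y : ℝ) (hx : 0 ≤ x)
    (hD : 2 * x * y * Real.cosh (2 * r) + x ^ 2 + y ^ 2 ≠ 0) (L : Matrix (Fin 4) (Fin 4) ℝ)
    (_hL : Vm r φ x y * L * Vm r φ x y + Omega4 * L * Omega4 = dVdphi r φ x y) :
    (1 / 2) * (dVdphi r φ x y * L).trace
      + 2 * (ddphi a φ x ⬝ᵥ (Vm r φ x y)⁻¹ *ᵥ ddphi a φ x) =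
    2 * a ^ 2 * x * (x * Real.sinh (2 * r) + x * Real.cosh (2 * r) + y)
      / (2 * x * y * Real.cosh (2 * r) + x ^ 2 + y ^ 2) := by
  have antisqueezed : x * Real.sinh (2 * r) + x * Real.cosh (2 * r) + y =
      x * Real.exp (2 * r) + y := by
    rw [← mul_add, Real.sinh_add_cosh]
  have antisqueezed_ne_zero : x * Real.exp (2 * r) + y ≠ 0 :=
    left_ne_zero_of_mul (mul_exp_add_mul_mul_exp_neg_add r x y ▸ hD)
  calc (1 / 2) * (dVdphi r φ x y * L).trace
        + 2 * (ddphi a φ x ⬝ᵥ (Vm r φ x y)⁻¹ *ᵥ ddphi a φ x)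
      = 2 * a ^ 2 * x / (x * Real.exp (-(2 * r)) + y) := by
        rw [dVdphi_eq_zero, zero_mul, trace_zero, mul_zero, zero_add,
          ddphi_dotProduct_inv_Vm_mulVec_ddphi r a φ x y hx hD]
        ring
    _ = _ := by
        rw [antisqueezed, ← mul_exp_add_mul_mul_exp_neg_add, mul_comm (_ * Real.exp (2 * r) + _),
          mul_div_mul_right _ _ antisqueezed_ne_zero]

theorem qfi_phi_phi (r a φ x y : ℝ) (hr : 0 ≤ r) (hx : 0 < x) (hy : |1 - x| < y)
    (L : Matrix (Fin 4) (Fin 4) ℝ) (hLsymm : L.IsSymm)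
    (hL : Vm r φ x y * L * Vm r φ x y + Omega4 * L * Omega4 = dVdphi r φ x y) :
    (1/2) * (dVdphi r φ x y * L).trace
      + 2 * (ddphi a φ x ⬝ᵥ (Vm r φ x y)⁻¹.mulVec (ddphi a φ x)) =
    2 * a^2 * x * (x * Real.sinh (2*r) + x * Real.cosh (2*r) + y)
      / (2 * x * y * Real.cosh (2*r) + x^2 + y^2) := by
  have hy0 : 0 < y := (abs_nonneg _).trans_lt hy
  exact qfi_phi_phi_general r a φ x y hx.le (by positivity) L hL
end
end

section
/- High-squeezing asymptotics of the noise-parameter Fisher information: fix reals x > 0 and y > |1 − x|, and let D(r) = 2xy·[ 2 cosh(2r)·(x² + y²) + x y cosh(4r) ] + x⁴ + 4x²y² + y⁴ − 1. Then, as r → ∞: (a) 2·( x² cosh(4r) + 2 x y cosh(2r) + y² + 1 ) / D(r) tends to 1/y²; (b) ( 2·(x² + y² + 1)·cosh(2r) + 4 x y ) / D(r) tends to 0; and (c) for any fixed a ∈ ℝ, 2 a² x ( x sinh(2r) + x cosh(2r) + y ) / ( 2 x y cosh(2r) + x² + y² ) tends to 2 a² x / y. (These are the limiting entries ℱ_{yy}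 → 1/y², ℱ_{xy} → 0 and the coefficient of ℱ_{φφ} in the high-energy regime, showing the parameters become asymptotically statistically independent.) -/
open Filter

/-! Since `cosh (4 * r) = 2 * cosh (2 * r) ^ 2 - 1`, the entries `ℱ_yy` and `ℱ_xy` are quotients of
polynomials of degree at most two in `cosh (2 * r)`, and `ℱ_φφ` becomes such a quotient in
`exp (2 * r)` after multiplying numerator and denominator by `exp (2 * r)`. Both variables tend to
infinity with `r`, so each limit is the quotient of the quadratic coefficients. -/

theorem tendsto_eval_div_eval_atTop_of_natDegree_le {𝕜 : Type*} [NormedField 𝕜] [LinearOrder 𝕜]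
    [IsStrictOrderedRing 𝕜] [OrderTopology 𝕜] {p q : Polynomial 𝕜} {n : ℕ}
    (hp : p.natDegree ≤ n) (hq : q.natDegree ≤ n) (hqn : q.coeff n ≠ 0) :
    Tendsto (fun t => p.eval t / q.eval t) atTop (nhds (p.coeff n / q.coeff n)) := by
  have hq_natDegree : q.natDegree = n := hq.antisymm (Polynomial.le_natDegree_of_ne_zero hqn)
  have hq_degree : q.degree = n := Polynomial.degree_eq_of_le_of_coeff_ne_zero
    (Polynomial.degree_le_of_natDegree_le hq) hqn
  rcases eq_or_ne (p.coeff n) 0 with hpn | hpn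
  · have hp_degree : p.degree < n := (Polynomial.degree_lt_iff_coeff_zero p n).2 fun m hm => by
      rcases hm.eq_or_lt with rfl | hm
      · exact hpn
      · exact Polynomial.coeff_eq_zero_of_natDegree_lt (hp.trans_lt hm)
    rw [hpn, zero_div]
    exact Polynomial.div_tendsto_atTop_zero_of_degree_lt p q (hp_degree.trans_eq hq_degree.symm)
  · have hp_natDegree : p.natDegree = n := hp.antisymm (Polynomial.le_natDegree_of_ne_zero hpn)
    have hp_degree : p.degree = n := Polynomial.degree_eq_of_le_of_coeff_ne_zero
      (Polynomial.degree_le_of_natDegree_le hp) hpn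
    have h := Polynomial.div_tendsto_atTop_leadingCoeff_div_of_degree_eq p q
      (hp_degree.trans hq_degree.symm)
    rwa [Polynomial.leadingCoeff, Polynomial.leadingCoeff, hp_natDegree, hq_natDegree] at h

theorem tendsto_quadratic_div_quadratic_atTop {𝕜 : Type*} [NormedField 𝕜] [LinearOrder 𝕜]
    [IsStrictOrderedRing 𝕜] [OrderTopology 𝕜] (a b c : 𝕜) {a' : 𝕜} (b' c' : 𝕜) (ha' : a' ≠ 0) :
    Tendsto (fun t => (a * t ^ 2 + b * t + c) / (a' * t ^ 2 + b' * t + c')) atTop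
      (nhds (a / a')) := by
  simpa [Polynomial.coeff_X, Polynomial.coeff_C] using
    tendsto_eval_div_eval_atTop_of_natDegree_le (n := 2)
      (Polynomial.natDegree_quadratic_le (a := a) (b := b) (c := c))
      (Polynomial.natDegree_quadratic_le (a := a') (b := b') (c := c'))
      (by simpa [Polynomial.coeff_X, Polynomial.coeff_C] using ha')

theorem tendsto_cosh_atTop : Tendsto Real.cosh atTop atTop := by
  refine tendsto_atTop_mono (fun r => ?_) (Real.tendsto_exp_atTop.atTop_div_const two_pos)
  rw [Real.cosh_eq]
  gcongr
  exact le_add_of_nonneg_right (Real.exp_pos _).le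

theorem cosh_four_mul (r : ℝ) : Real.cosh (4 * r) = 2 * Real.cosh (2 * r) ^ 2 - 1 := by
  rw [show 4 * r = 2 * (2 * r) by ring, Real.cosh_two_mul, Real.sinh_sq]
  ring

/-- The common denominator `D(r)` of the Fisher information entries `ℱ_yy` and `ℱ_xy` of a phase
covariant Gaussian channel with noise parameters `x`, `y`, probed with squeezing `r`. -/
noncomputable def noiseDenominator (x y r : ℝ) : ℝ :=
  2 * x * y * (2 * Real.cosh (2 * r) * (x ^ 2 + y ^ 2) + x * y * Real.cosh (4 * r))
    + x ^ 4 + 4 * x ^ 2 * y ^ 2 + y ^ 4 - 1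

theorem noiseDenominator_eq_quadratic_cosh (x y r : ℝ) :
    noiseDenominator x y r = 4 * x ^ 2 * y ^ 2 * Real.cosh (2 * r) ^ 2
      + 4 * x * y * (x ^ 2 + y ^ 2) * Real.cosh (2 * r) + ((x ^ 2 + y ^ 2) ^ 2 - 1) := by
  rw [noiseDenominator, cosh_four_mul]
  ring

section

variable {x y : ℝ}

theorem tendsto_quadratic_cosh_div_noiseDenominator (hx : x ≠ 0) (hy : y ≠ 0) (a b c : ℝ) :
    Tendsto (fun r => (a * Real.cosh (2 * r) ^ 2 + b * Real.cosh (2 * r) + c)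
      / noiseDenominator x y r) atTop (nhds (a / (4 * x ^ 2 * y ^ 2))) := by
  simp only [noiseDenominator_eq_quadratic_cosh]
  exact (tendsto_quadratic_div_quadratic_atTop a b c _ _ (by positivity)).comp
    (tendsto_cosh_atTop.comp (tendsto_id.const_mul_atTop two_pos))

theorem tendsto_fisher_yy (hx : x ≠ 0) (hy : y ≠ 0) :
    Tendsto (fun r => 2 * (x ^ 2 * Real.cosh (4 * r) + 2 * x * y * Real.cosh (2 * r) + y ^ 2 + 1)
      / noiseDenominator x y r) atTop (nhds (1 / y ^ 2)) := by
  have hlimit : 4 * x ^ 2 / (4 * x ^ 2 * y ^ 2) = 1 / y ^ 2 := by field_simp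
  rw [← hlimit]
  refine (tendsto_quadratic_cosh_div_noiseDenominator hx hy _ (4 * x * y)
    (2 * (y ^ 2 + 1 - x ^ 2))).congr fun r => ?_
  rw [cosh_four_mul]
  ring

theorem tendsto_fisher_xy (hx : x ≠ 0) (hy : y ≠ 0) :
    Tendsto (fun r => (2 * (x ^ 2 + y ^ 2 + 1) * Real.cosh (2 * r) + 4 * x * y)
      / noiseDenominator x y r) atTop (nhds 0) := by
  simpa only [zero_mul, zero_add, zero_div] using
    tendsto_quadratic_cosh_div_noiseDenominator hx hy 0 (2 * (x ^ 2 + y ^ 2 + 1)) (4 * x * y)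

theorem tendsto_fisher_phiphi (hx : x ≠ 0) (hy : y ≠ 0) (a : ℝ) :
    Tendsto (fun r => 2 * a ^ 2 * x * (x * Real.sinh (2 * r) + x * Real.cosh (2 * r) + y)
      / (2 * x * y * Real.cosh (2 * r) + x ^ 2 + y ^ 2)) atTop (nhds (2 * a ^ 2 * x / y)) := by
  have hlimit : 2 * a ^ 2 * x ^ 2 / (x * y) = 2 * a ^ 2 * x / y := by field_simp
  rw [← hlimit]
  refine ((tendsto_quadratic_div_quadratic_atTop _ (2 * a ^ 2 * x * y) 0 (x ^ 2 + y ^ 2) (x * y)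
    (mul_ne_zero hx hy)).comp (Real.tendsto_exp_atTop.comp
      (tendsto_id.const_mul_atTop two_pos))).congr fun r => ?_
  have hexp : Real.exp (2 * r) * Real.exp (-(2 * r)) = 1 := by
    rw [← Real.exp_add, add_neg_cancel, Real.exp_zero]
  rw [← mul_div_mul_right _ (2 * x * y * _ + _ + _) (Real.exp_ne_zero (2 * r)), Real.cosh_eq,
    Real.sinh_eq]
  simp only [Function.comp_apply, id_eq]
  congr 1
  · ring
  · linear_combination (-x * y) * hexp

end

theorem qfi_high_squeezing_asymptotics_general (x y a : ℝ) (hx : x ≠ 0) (hy : y ≠ 0) :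
    Tendsto (fun r : ℝ =>
        2 * (x ^ 2 * Real.cosh (4 * r) + 2 * x * y * Real.cosh (2 * r) + y ^ 2 + 1)
          / noiseDenominator x y r)
      atTop (nhds (1 / y ^ 2)) ∧
    Tendsto (fun r : ℝ =>
        (2 * (x ^ 2 + y ^ 2 + 1) * Real.cosh (2 * r) + 4 * x * y) / noiseDenominator x y r)
      atTop (nhds 0) ∧
    Tendsto (fun r : ℝ =>
        2 * a ^ 2 * x * (x * Real.sinh (2 * r) + x * Real.cosh (2 * r) + y)
          / (2 * x * y * Real.cosh (2 * r) + x ^ 2 + y ^ 2))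
      atTop (nhds (2 * a ^ 2 * x / y)) :=
  ⟨tendsto_fisher_yy hx hy, tendsto_fisher_xy hx hy, tendsto_fisher_phiphi hx hy a⟩

theorem qfi_high_squeezing_asymptotics (x y a : ℝ) (hx : 0 < x) (hy : |1 - x| < y)
    (D : ℝ → ℝ)
    (hD : ∀ r, D r = 2 * x * y * (2 * Real.cosh (2*r) * (x^2 + y^2)
        + x * y * Real.cosh (4*r)) + x^4 + 4 * x^2 * y^2 + y^4 - 1) :
    Tendsto (fun r : ℝ =>
        2 * (x^2 * Real.cosh (4*r) + 2 * x * y * Real.cosh (2*r) + y^2 + 1) / D r)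
      atTop (nhds (1 / y^2)) ∧
    Tendsto (fun r : ℝ =>
        (2 * (x^2 + y^2 + 1) * Real.cosh (2*r) + 4 * x * y) / D r)
      atTop (nhds 0) ∧
    Tendsto (fun r : ℝ =>
        2 * a^2 * x * (x * Real.sinh (2*r) + x * Real.cosh (2*r) + y)
          / (2 * x * y * Real.cosh (2*r) + x^2 + y^2))
      atTop (nhds (2 * a^2 * x / y)) := by
  obtain rfl : D = noiseDenominator x y := funext hD
  exact qfi_high_squeezing_asymptotics_general x y a hx.ne' ((abs_nonneg _).trans_lt hy).ne'
end
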